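/- Let A be a real m×n matrix, B a real m×r matrix, S a subset of column indices of A with A_{:S}ᵀA_{:S} invertible, and p a column index not in S such that A_{:S∪{p}}ᵀA_{:S∪{p}} is invertible. Let E = A − P^(S)A and F = B − P^(S)B be the residual matrices, and let R = E_{:p}(E_{:p}ᵀE_{:p})⁻¹E_{:p}ᵀ (well-defined since E_{:p}ᵀE_{:p} > 0). Then the residual matrices after adding p satisfy B − P^(S∪{p})B = F − RF and A − P^(S∪{p})A = E − RE. -/

import Mathlib

open Matrix

/-- The `m × |S|` submatrix of `A` consisting of the columns indexed by `S`. -/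
noncomputable def cols {m n : ℕ} (A : Matrix (Fin m) (Fin n) ℝ) (S : Finset (Fin n)) :
    Matrix (Fin m) {j // j ∈ S} ℝ :=
  Matrix.of fun i j => A i j.val

/-- The projection matrix `A_{:S} (A_{:S}ᵀ A_{:S})⁻¹ A_{:S}ᵀ` onto the span of the columns of `A`
indexed by `S`. -/
noncomputable def proj {m n : ℕ} (A : Matrix (Fin m) (Fin n) ℝ) (S : Finset (Fin n)) :
    Matrix (Fin m) (Fin m) ℝ :=
  cols A S * ((cols A S)ᵀ * cols A S)⁻¹ * (cols A S)ᵀ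

/-!
Adjoining columns `Y` to `X` splits the span of `[X Y]` orthogonally into the span of `X` and the
span of the residual `E = Y - P Y`, so the projection matrices add. The Gram matrix of `E` is the
Schur complement of `Xᵀ X` in the Gram matrix of `[X Y]`, hence invertible, and `Eᵀ X = 0` turns the
sum of projections into a successive residual. This is pure algebra, valid over any commutative
ring; for a single column `e` the projection of `E` is `e eᵀ / (e ⬝ e)`.
-/

section ColProj

variable {R m n k l r : Type*} [CommRing R] [Fintype m]
  [Fintype k] [DecidableEq k] [Fintype l] [DecidableEq l]

/-- The projection matrix `X (Xᵀ X)⁻¹ Xᵀ` onto the span of the columns of `X`. When the Gram matrix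
`Xᵀ X` is not invertible, its inverse and hence `colProj X` are the junk value `0`. -/
noncomputable def colProj (X : Matrix m k R) : Matrix m m R :=
  X * (Xᵀ * X)⁻¹ * Xᵀ

/-- The residual matrix `B - P B` of `B`, where `P` is the projection matrix of `X`. -/
noncomputable def colResidual (X : Matrix m k R) (B : Matrix m n R) : Matrix m n R :=
  B - colProj X * B

theorem colProj_transpose (X : Matrix m k R) : (colProj X)ᵀ = colProj X := by
  simp only [colProj, transpose_mul, transpose_nonsing_inv, transpose_transpose, Matrix.mul_assoc]

theorem colProj_mul_self {X : Matrix m k R} (hX : IsUnit (Xᵀ * X)) : colProj X * X = X := by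
  rw [colProj, Matrix.mul_assoc, Matrix.mul_assoc,
    nonsing_inv_mul _ ((isUnit_iff_isUnit_det _).1 hX), Matrix.mul_one]

theorem mul_colProj_of_mul_eq {X : Matrix m k R} {M : Matrix m m R} (h : M * X = X) :
    M * colProj X = colProj X := by
  rw [colProj, ← Matrix.mul_assoc, ← Matrix.mul_assoc, h]

theorem colProj_mul_eq_zero {X : Matrix m k R} {Y : Matrix m n R} (h : Xᵀ * Y = 0) :
    colProj X * Y = 0 := by
  rw [colProj, Matrix.mul_assoc, h, Matrix.mul_zero]

theorem colProj_mul_colProj_eq_zero {X : Matrix m k R} {Y : Matrix m l R} (h : Xᵀ * Y = 0) :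
    colProj X * colProj Y = 0 := by
  rw [colProj.eq_def Y, ← Matrix.mul_assoc, ← Matrix.mul_assoc, colProj_mul_eq_zero h,
    Matrix.zero_mul, Matrix.zero_mul]

theorem colProj_eq_of_transpose_eq {X : Matrix m k R} {Q : Matrix m m R} (hQ : Qᵀ = Q)
    (hQX : Q * X = X) (hXQ : colProj X * Q = Q) : colProj X = Q :=
  calc
    colProj X = (Q * colProj X)ᵀ := by rw [mul_colProj_of_mul_eq hQX, colProj_transpose]
    _ = Q := by rw [transpose_mul, colProj_transpose, hQ, hXQ]

theorem colProj_submatrix_equiv (X : Matrix m k R) (f : l ≃ k) :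
    colProj (X.submatrix id f) = colProj X := by
  simp only [colProj, transpose_submatrix, inv_submatrix_equiv, submatrix_mul_equiv,
    ← submatrix_mul _ _ _ id _ Function.bijective_id, submatrix_id_id]

theorem colProj_of_unique [Unique k] (X : Matrix m k R) :
    colProj X = Ring.inverse (X.col default ⬝ᵥ X.col default) •
      vecMulVec (X.col default) (X.col default) := by
  have hinv : (Xᵀ * X)⁻¹ default default = Ring.inverse (X.col default ⬝ᵥ X.col default) := by
    rw [Matrix.inv_def, adjugate_subsingleton, det_unique, Matrix.smul_apply, one_apply_eq,
      smul_eq_mul, mul_one]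
    rfl
  ext i j
  simp only [colProj, mul_apply, transpose_apply, Finset.univ_unique, Finset.sum_singleton,
    Matrix.smul_apply, vecMulVec_apply, col_apply, smul_eq_mul, ← hinv]
  ring

theorem colProj_mul_add_colResidual (X : Matrix m k R) (B : Matrix m n R) :
    colProj X * B + colResidual X B = B := by
  rw [colResidual, add_sub_cancel]

theorem transpose_mul_colResidual {X : Matrix m k R} (hX : IsUnit (Xᵀ * X)) (B : Matrix m n R) :
    Xᵀ * colResidual X B = 0 := by
  have hXP : Xᵀ * colProj X = Xᵀ := by
    rw [← colProj_transpose X, ← transpose_mul, colProj_mul_self hX]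
  rw [colResidual, Matrix.mul_sub, ← Matrix.mul_assoc, hXP, sub_self]

theorem transpose_colResidual_mul {X : Matrix m k R} (hX : IsUnit (Xᵀ * X)) (B : Matrix m n R) :
    (colResidual X B)ᵀ * X = 0 := by
  rw [← transpose_transpose X, ← transpose_mul, transpose_transpose,
    transpose_mul_colResidual hX, transpose_zero]

theorem transpose_colResidual_mul_colResidual {X : Matrix m k R} (hX : IsUnit (Xᵀ * X))
    (Y : Matrix m n R) :
    (colResidual X Y)ᵀ * colResidual X Y = Yᵀ * Y - Yᵀ * X * (Xᵀ * X)⁻¹ * (Xᵀ * Y) := by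
  have hPE : colProj X * colResidual X Y = 0 :=
    colProj_mul_eq_zero (transpose_mul_colResidual hX Y)
  have hEt : (colResidual X Y)ᵀ = Yᵀ - Yᵀ * colProj X := by
    rw [colResidual, transpose_sub, transpose_mul, colProj_transpose]
  calc
    (colResidual X Y)ᵀ * colResidual X Y = Yᵀ * colResidual X Y := by
      rw [hEt, Matrix.sub_mul, Matrix.mul_assoc, hPE, Matrix.mul_zero, sub_zero]
    _ = Yᵀ * Y - Yᵀ * X * (Xᵀ * X)⁻¹ * (Xᵀ * Y) := by
      simp only [colResidual, colProj, Matrix.mul_sub, Matrix.mul_assoc]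

theorem isUnit_transpose_colResidual_mul_colResidual {X : Matrix m k R} {Y : Matrix m l R}
    (hX : IsUnit (Xᵀ * X)) (hXY : IsUnit ((fromCols X Y)ᵀ * fromCols X Y)) :
    IsUnit ((colResidual X Y)ᵀ * colResidual X Y) := by
  let := hX.invertible
  rwa [transpose_fromCols, fromRows_mul_fromCols, isUnit_fromBlocks_iff_of_invertible₁₁,
    invOf_eq_nonsing_inv, ← transpose_colResidual_mul_colResidual hX] at hXY

theorem colProj_fromCols {X : Matrix m k R} {Y : Matrix m l R} (hX : IsUnit (Xᵀ * X))
    (hXY : IsUnit ((fromCols X Y)ᵀ * fromCols X Y)) :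
    colProj (fromCols X Y) = colProj X + colProj (colResidual X Y) := by
  set P := colProj (fromCols X Y)
  set E := colResidual X Y with hE
  have hEE : colProj E * E = E :=
    colProj_mul_self (isUnit_transpose_colResidual_mul_colResidual hX hXY)
  have hEX : Eᵀ * X = 0 := transpose_colResidual_mul hX Y
  have hEY : colProj E * Y = E := by
    rw [← colProj_mul_add_colResidual X Y, Matrix.mul_add, ← Matrix.mul_assoc,
      colProj_mul_colProj_eq_zero hEX, Matrix.zero_mul, zero_add, hEE]
  obtain ⟨hPX, hPY⟩ : P * X = X ∧ P * Y = Y :=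
    fromCols_inj (by rw [← mul_fromCols, colProj_mul_self hXY])
  have hPPX : P * colProj X = colProj X := mul_colProj_of_mul_eq hPX
  have hPE : P * E = E := by
    rw [hE, colResidual, Matrix.mul_sub, hPY, ← Matrix.mul_assoc, hPPX]
  apply colProj_eq_of_transpose_eq
  · rw [transpose_add, colProj_transpose, colProj_transpose]
  · rw [mul_fromCols, Matrix.add_mul, Matrix.add_mul, colProj_mul_self hX,
      colProj_mul_eq_zero hEX, add_zero, hEY, colProj_mul_add_colResidual]
  · rw [Matrix.mul_add, hPPX, mul_colProj_of_mul_eq hPE]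

theorem colResidual_fromCols {X : Matrix m k R} {Y : Matrix m l R} (hX : IsUnit (Xᵀ * X))
    (hXY : IsUnit ((fromCols X Y)ᵀ * fromCols X Y)) (B : Matrix m r R) :
    colResidual (fromCols X Y) B = colResidual (colResidual X Y) (colResidual X B) := by
  have hEP : colProj (colResidual X Y) * colProj X = 0 :=
    colProj_mul_colProj_eq_zero (transpose_colResidual_mul hX Y)
  calc
    colResidual (fromCols X Y) B
      = B - colProj X * B - colProj (colResidual X Y) * B := by
      rw [colResidual, colProj_fromCols hX hXY, Matrix.add_mul, sub_sub]
    _ = colResidual X B - colProj (colResidual X Y) * colResidual X B := by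
      rw [colResidual.eq_def X B, Matrix.mul_sub, ← Matrix.mul_assoc, hEP, Matrix.zero_mul,
        sub_zero]

end ColProj

section ColSubmatrix

variable {R m n r : Type*}

/-- The submatrix `A_{:S}` of the columns of `A` indexed by `S`, over any coefficients and index
types; `cols` is definitionally its instance for a real matrix indexed by `Fin`. -/
def colSubmatrix (A : Matrix m n R) (S : Finset n) : Matrix m S R :=
  A.submatrix id (↑)

theorem colSubmatrix_union_submatrix [DecidableEq n] (A : Matrix m n R) {S T : Finset n}
    (hST : Disjoint S T) :
    (colSubmatrix A (S ∪ T)).submatrix id (Equiv.Finset.union S T hST) =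
      fromCols (colSubmatrix A S) (colSubmatrix A T) := by
  ext i (j | j) <;> rfl

theorem colResidual_colSubmatrix_union [CommRing R] [Fintype m] [DecidableEq n]
    (A : Matrix m n R) (B : Matrix m r R) {S T : Finset n} (hST : Disjoint S T)
    (hS : IsUnit ((colSubmatrix A S)ᵀ * colSubmatrix A S))
    (hU : IsUnit ((colSubmatrix A (S ∪ T))ᵀ * colSubmatrix A (S ∪ T))) :
    colResidual (colSubmatrix A (S ∪ T)) B =
      colResidual (colSubmatrix (colResidual (colSubmatrix A S) A) T)
        (colResidual (colSubmatrix A S) B) := by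
  have hXY : IsUnit ((fromCols (colSubmatrix A S) (colSubmatrix A T))ᵀ *
      fromCols (colSubmatrix A S) (colSubmatrix A T)) := by
    rw [← colSubmatrix_union_submatrix A hST, transpose_submatrix,
      ← submatrix_mul _ _ _ id _ Function.bijective_id]
    exact (isUnit_submatrix_equiv _ _).2 hU
  rw [colResidual, ← colProj_submatrix_equiv _ (Equiv.Finset.union S T hST),
    colSubmatrix_union_submatrix]
  exact colResidual_fromCols hS hXY B

end ColSubmatrix

theorem stmt10_general {K m n r : Type*} [CommRing K] [Fintype m] [DecidableEq n]
    (A : Matrix m n K) (B : Matrix m r K) (S : Finset n) (p : n) (hp : p ∉ S)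
    (hS : IsUnit ((colSubmatrix A S)ᵀ * colSubmatrix A S))
    (hSp : IsUnit ((colSubmatrix A (insert p S))ᵀ * colSubmatrix A (insert p S)))
    (E : Matrix m n K) (hE : E = A - colProj (colSubmatrix A S) * A)
    (F : Matrix m r K) (hF : F = B - colProj (colSubmatrix A S) * B)
    (e : m → K) (he : e = fun k => E k p)
    (R : Matrix m m K) (hR : R = Ring.inverse (e ⬝ᵥ e) • vecMulVec e e) :
    B - colProj (colSubmatrix A (insert p S)) * B = F - R * F ∧
      A - colProj (colSubmatrix A (insert p S)) * A = E - R * E := by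
  have hRE : R = colProj (colSubmatrix E {p}) := by rw [hR, he, colProj_of_unique]; rfl
  have hST : Disjoint S {p} := Finset.disjoint_singleton_right.2 hp
  rw [← Finset.union_singleton] at hSp ⊢
  subst hRE hF hE
  exact ⟨colResidual_colSubmatrix_union A B hST hS hSp,
    colResidual_colSubmatrix_union A A hST hS hSp⟩

theorem stmt10 {m n r : ℕ} (A : Matrix (Fin m) (Fin n) ℝ) (B : Matrix (Fin m) (Fin r) ℝ)
    (S : Finset (Fin n)) (p : Fin n) (hp : p ∉ S)
    (hS : IsUnit ((cols A S)ᵀ * cols A S))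
    (hSp : IsUnit ((cols A (insert p S))ᵀ * cols A (insert p S)))
    (E : Matrix (Fin m) (Fin n) ℝ) (hE : E = A - proj A S * A)
    (F : Matrix (Fin m) (Fin r) ℝ) (hF : F = B - proj A S * B)
    (e : Fin m → ℝ) (he : e = fun k => E k p)
    (R : Matrix (Fin m) (Fin m) ℝ) (hR : R = (e ⬝ᵥ e)⁻¹ • vecMulVec e e) :
    B - proj A (insert p S) * B = F - R * F ∧ A - proj A (insert p S) * A = E - R * E := by
  rw [← Ring.inverse_eq_inv] at hR
  exact stmt10_general A B S p hp hS hSp E hE F hF e he R hR
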